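/- arXiv:1602.00530 — 4 statements merged into one kernel-verified Lean document; each statement's English description precedes it below -/
import Mathlib

section
/- (Locality.) Let Q₁ and Q₂ be two open subsets of (0,∞)×X and let F be continuous on (Q₁∪Q₂)×ℝ×ℝ, even and convex in p. If u is a metric viscosity subsolution of F(z,|Du|,∂ₜu)=0 in Q₁ and also a metric viscosity subsolution of F(z,|Du|,∂ₜu)=0 in Q₂, then u is a metric viscosity subsolution of F(z,|Du|,∂ₜu)=0 in Q = Q₁∪Q₂. -/
open Filter Metric Set Topology

noncomputable section

/-- A geodesic metric space: any two points are joined by a constant-speed geodesic. -/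
def IsGeodesicSpace (X : Type*) [MetricSpace X] : Prop :=
  ∀ x y : X, ∃ f : ℝ → X, f 0 = x ∧ f 1 = y ∧
    ∀ s ∈ Set.Icc (0:ℝ) 1, ∀ t ∈ Set.Icc (0:ℝ) 1,
      dist (f s) (f t) = |s - t| * dist x y

variable {X : Type*} [MetricSpace X]

/-- Upper local mslope |∇⁺v|(x) = limsup_{y→x} [v(y)-v(x)]₊ / d(y,x). -/
def mslopeUp (v : X → ℝ) (x : X) : ℝ :=
  Filter.limsup (fun y => max (v y - v x) 0 / dist y x) (𝓝[≠] x)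

/-- Lower local mslope |∇⁻v|(x) = limsup_{y→x} [v(y)-v(x)]₋ / d(y,x). -/
def mslopeDown (v : X → ℝ) (x : X) : ℝ :=
  Filter.limsup (fun y => max (v x - v y) 0 / dist y x) (𝓝[≠] x)

/-- Local mslope |∇v|(x) = limsup_{y→x} |v(y)-v(x)| / d(y,x). -/
def mslope (v : X → ℝ) (x : X) : ℝ :=
  Filter.limsup (fun y => |v y - v x| / dist y x) (𝓝[≠] x)

/-- Spatial upper local mslope of a function of time and space. -/
def slopeUpT (u : ℝ × X → ℝ) (z : ℝ × X) : ℝ := mslopeUp (fun y => u (z.1, y)) z.2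

/-- Spatial lower local mslope of a function of time and space. -/
def slopeDownT (u : ℝ × X → ℝ) (z : ℝ × X) : ℝ := mslopeDown (fun y => u (z.1, y)) z.2

/-- Spatial local mslope of a function of time and space. -/
def slopeT (u : ℝ × X → ℝ) (z : ℝ × X) : ℝ := mslope (fun y => u (z.1, y)) z.2

/-- Time derivative ∂ₜu. -/
def timeDeriv (u : ℝ × X → ℝ) (z : ℝ × X) : ℝ := deriv (fun s => u (s, z.2)) z.1

/-- Locally Lipschitz on a set. -/
def LocLipOn {α : Type*} [PseudoMetricSpace α] (s : Set α) (f : α → ℝ) : Prop :=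
  ∀ z ∈ s, ∃ K : NNReal, ∃ t ∈ 𝓝[s] z, LipschitzOnWith K f t

/-- The class 𝒞(Q): locally Lipschitz with (existing) continuous time derivative. -/
def IsCQ (Q : Set (ℝ × X)) (u : ℝ × X → ℝ) : Prop :=
  LocLipOn Q u ∧
  (∀ z ∈ Q, DifferentiableAt ℝ (fun s : ℝ => u (s, z.2)) z.1) ∧
  ContinuousOn (timeDeriv u) Q

/-- The class C̲¹(Q). -/
def IsC1UnderQ (Q : Set (ℝ × X)) (u : ℝ × X → ℝ) : Prop :=
  IsCQ Q u ∧ Set.EqOn (slopeDownT u) (slopeT u) Q ∧ ContinuousOn (slopeT u) Q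

/-- The class C̄¹(Q). -/
def IsC1UpperQ (Q : Set (ℝ × X)) (u : ℝ × X → ℝ) : Prop :=
  IsCQ Q u ∧ Set.EqOn (slopeUpT u) (slopeT u) Q ∧ ContinuousOn (slopeT u) Q

/-- The class 𝒞(U) for stationary problems: locally Lipschitz functions. -/
def IsCU (U : Set X) (v : X → ℝ) : Prop := LocLipOn U v

/-- The class C̲¹(U). -/
def IsC1UnderU (U : Set X) (v : X → ℝ) : Prop :=
  IsCU U v ∧ Set.EqOn (mslopeDown v) (mslope v) U ∧ ContinuousOn (mslope v) U

/-- The class C̄¹(U). -/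
def IsC1UpperU (U : Set X) (v : X → ℝ) : Prop :=
  IsCU U v ∧ Set.EqOn (mslopeUp v) (mslope v) U ∧ ContinuousOn (mslope v) U

/-- F_r(z,p,q) = sup_{p'∈[-1,1]} F(z,p+rp',q) if r ≥ 0, inf if r ≤ 0. -/
def Fr (F : (ℝ × X) → ℝ → ℝ → ℝ) (r : ℝ) (z : ℝ × X) (p q : ℝ) : ℝ :=
  if 0 ≤ r then sSup ((fun p' => F z (p + r * p') q) '' Set.Icc (-1:ℝ) 1)
  else sInf ((fun p' => F z (p + r * p') q) '' Set.Icc (-1:ℝ) 1)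

/-- H_r(x,p) = sup_{p'∈[-1,1]} H(x,p+rp') if r ≥ 0, inf if r ≤ 0. -/
def Hr (H : X → ℝ → ℝ) (r : ℝ) (x : X) (p : ℝ) : ℝ :=
  if 0 ≤ r then sSup ((fun p' => H x (p + r * p')) '' Set.Icc (-1:ℝ) 1)
  else sInf ((fun p' => H x (p + r * p')) '' Set.Icc (-1:ℝ) 1)

/-- Upper semicontinuous envelope (relative to a set) of an extended-real function. -/
def uscEnv {α : Type*} [TopologicalSpace α] (s : Set α) (u : α → EReal) (z : α) : EReal :=
  Filter.limsup u (𝓝[s] z)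

/-- Lower semicontinuous envelope (relative to a set) of an extended-real function. -/
def lscEnv {α : Type*} [TopologicalSpace α] (s : Set α) (u : α → EReal) (z : α) : EReal :=
  Filter.liminf u (𝓝[s] z)

/-- Upper semicontinuous envelope (relative to a set) of a real function. -/
def uscEnvR {α : Type*} [TopologicalSpace α] (s : Set α) (f : α → ℝ) (z : α) : ℝ :=
  Filter.limsup f (𝓝[s] z)

/-- Metric viscosity subsolution of F(z,|Du|,∂ₜu)=0 in Q (Gangbo–Święch). -/
def IsSubsol (Q : Set (ℝ × X)) (F : (ℝ × X) → ℝ → ℝ → ℝ) (u : ℝ × X → EReal) : Prop :=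
  ∀ ψ₁ ψ₂ : ℝ × X → ℝ, IsC1UnderQ Q ψ₁ → IsCQ Q ψ₂ → ∀ z ∈ Q,
    (∃ R > 0, uscEnv Q u z = ((ψ₁ z + ψ₂ z : ℝ) : EReal) ∧
      ∀ w ∈ Metric.ball z R ∩ Q, uscEnv Q u w ≤ ((ψ₁ w + ψ₂ w : ℝ) : EReal)) →
    Fr F (-(uscEnvR Q (slopeT ψ₂) z)) z (slopeT ψ₁ z)
      (timeDeriv (fun w => ψ₁ w + ψ₂ w) z) ≤ 0

/-- Metric viscosity supersolution of F(z,|Du|,∂ₜu)=0 in Q (Gangbo–Święch). -/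
def IsSupersol (Q : Set (ℝ × X)) (F : (ℝ × X) → ℝ → ℝ → ℝ) (u : ℝ × X → EReal) : Prop :=
  ∀ ψ₁ ψ₂ : ℝ × X → ℝ, IsC1UpperQ Q ψ₁ → IsCQ Q ψ₂ → ∀ z ∈ Q,
    (∃ R > 0, lscEnv Q u z = ((ψ₁ z + ψ₂ z : ℝ) : EReal) ∧
      ∀ w ∈ Metric.ball z R ∩ Q, ((ψ₁ w + ψ₂ w : ℝ) : EReal) ≤ lscEnv Q u w) →
    0 ≤ Fr F (uscEnvR Q (slopeT ψ₂) z) z (slopeT ψ₁ z)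
      (timeDeriv (fun w => ψ₁ w + ψ₂ w) z)

/-- Metric viscosity solution. -/
def IsSol (Q : Set (ℝ × X)) (F : (ℝ × X) → ℝ → ℝ → ℝ) (u : ℝ × X → EReal) : Prop :=
  IsSubsol Q F u ∧ IsSupersol Q F u

/-- Metric viscosity subsolution of the stationary equation H(x,|Dv|)=0 in U. -/
def IsSubsolS (U : Set X) (H : X → ℝ → ℝ) (v : X → EReal) : Prop :=
  ∀ ψ₁ ψ₂ : X → ℝ, IsC1UnderU U ψ₁ → IsCU U ψ₂ → ∀ x ∈ U,
    (∃ R > 0, uscEnv U v x = ((ψ₁ x + ψ₂ x : ℝ) : EReal) ∧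
      ∀ w ∈ Metric.ball x R ∩ U, uscEnv U v w ≤ ((ψ₁ w + ψ₂ w : ℝ) : EReal)) →
    Hr H (-(uscEnvR U (mslope ψ₂) x)) x (mslope ψ₁ x) ≤ 0

/-- Metric viscosity supersolution of the stationary equation H(x,|Dv|)=0 in U. -/
def IsSupersolS (U : Set X) (H : X → ℝ → ℝ) (v : X → EReal) : Prop :=
  ∀ ψ₁ ψ₂ : X → ℝ, IsC1UpperU U ψ₁ → IsCU U ψ₂ → ∀ x ∈ U,
    (∃ R > 0, lscEnv U v x = ((ψ₁ x + ψ₂ x : ℝ) : EReal) ∧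
      ∀ w ∈ Metric.ball x R ∩ U, ((ψ₁ w + ψ₂ w : ℝ) : EReal) ≤ lscEnv U v w) →
    0 ≤ Hr H (uscEnvR U (mslope ψ₂) x) x (mslope ψ₁ x)

/-- Metric viscosity solution of the stationary equation. -/
def IsSolS (U : Set X) (H : X → ℝ → ℝ) (v : X → EReal) : Prop :=
  IsSubsolS U H v ∧ IsSupersolS U H v

lemma IsOpen.nhdsWithin_eq_of_subset {α : Type*} [TopologicalSpace α] {s t : Set α}
    (hs : IsOpen s) (hst : s ⊆ t) {z : α} (hz : z ∈ s) : 𝓝[t] z = 𝓝[s] z := by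
  rw [hs.nhdsWithin_eq hz, nhdsWithin_eq_nhds]
  exact mem_of_superset (hs.mem_nhds hz) hst

lemma LocLipOn.mono {α : Type*} [PseudoMetricSpace α] {s t : Set α} {f : α → ℝ}
    (h : LocLipOn t f) (hst : s ⊆ t) : LocLipOn s f := fun z hz =>
  let ⟨K, v, hv, hK⟩ := h z (hst hz)
  ⟨K, v, nhdsWithin_mono z hst hv, hK⟩

lemma IsCQ.mono {P Q : Set (ℝ × X)} {u : ℝ × X → ℝ} (h : IsCQ Q u) (hPQ : P ⊆ Q) :
    IsCQ P u :=
  ⟨h.1.mono hPQ, fun z hz => h.2.1 z (hPQ hz), h.2.2.mono hPQ⟩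

lemma IsC1UnderQ.mono {P Q : Set (ℝ × X)} {u : ℝ × X → ℝ} (h : IsC1UnderQ Q u)
    (hPQ : P ⊆ Q) : IsC1UnderQ P u :=
  ⟨h.1.mono hPQ, h.2.1.mono hPQ, h.2.2.mono hPQ⟩

/-- The subsolution test in `Q` at a point of an open subset `P` follows from the one in `P`. -/
lemma IsSubsol.test_of_subset {P Q : Set (ℝ × X)} (hP : IsOpen P) (hPQ : P ⊆ Q)
    {F : (ℝ × X) → ℝ → ℝ → ℝ} {u : ℝ × X → EReal} (h : IsSubsol P F u)
    {ψ₁ ψ₂ : ℝ × X → ℝ} (hψ₁ : IsC1UnderQ Q ψ₁) (hψ₂ : IsCQ Q ψ₂) {z : ℝ × X} (hz : z ∈ P)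
    (hmax : ∃ R > 0, uscEnv Q u z = ((ψ₁ z + ψ₂ z : ℝ) : EReal) ∧
      ∀ w ∈ Metric.ball z R ∩ Q, uscEnv Q u w ≤ ((ψ₁ w + ψ₂ w : ℝ) : EReal)) :
    Fr F (-(uscEnvR Q (slopeT ψ₂) z)) z (slopeT ψ₁ z)
      (timeDeriv (fun w => ψ₁ w + ψ₂ w) z) ≤ 0 := by
  have henv : ∀ w ∈ P, uscEnv Q u w = uscEnv P u w := fun w hw => by
    rw [uscEnv, uscEnv, hP.nhdsWithin_eq_of_subset hPQ hw]
  obtain ⟨R, hR, hzeq, hle⟩ := hmax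
  rw [uscEnvR, hP.nhdsWithin_eq_of_subset hPQ hz]
  exact h ψ₁ ψ₂ (hψ₁.mono hPQ) (hψ₂.mono hPQ) z hz
    ⟨R, hR, henv z hz ▸ hzeq, fun w hw => henv w hw.2 ▸ hle w ⟨hw.1, hPQ hw.2⟩⟩

/-- locality. -/
theorem stmt3 [CompleteSpace X] (hgeo : IsGeodesicSpace X)
    (Q₁ Q₂ : Set (ℝ × X)) (hQ₁ : IsOpen Q₁) (hQ₂ : IsOpen Q₂)
    (hQ₁s : Q₁ ⊆ Set.Ioi (0:ℝ) ×ˢ (Set.univ : Set X))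
    (hQ₂s : Q₂ ⊆ Set.Ioi (0:ℝ) ×ˢ (Set.univ : Set X))
    (F : (ℝ × X) → ℝ → ℝ → ℝ)
    (hFc : ContinuousOn (fun w : (ℝ × X) × ℝ × ℝ => F w.1 w.2.1 w.2.2)
      ((Q₁ ∪ Q₂) ×ˢ ((Set.univ : Set ℝ) ×ˢ (Set.univ : Set ℝ))))
    (hFe : ∀ z p q, F z (-p) q = F z p q)
    (hFconv : ∀ z q, ConvexOn ℝ Set.univ fun p => F z p q)
    (u : ℝ × X → EReal)
    (h1 : IsSubsol Q₁ F u) (h2 : IsSubsol Q₂ F u) :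
    IsSubsol (Q₁ ∪ Q₂) F u := by
  intro ψ₁ ψ₂ hψ₁ hψ₂ z hz hmax
  rcases hz with hz | hz
  · exact h1.test_of_subset hQ₁ subset_union_left hψ₁ hψ₂ hz hmax
  · exact h2.test_of_subset hQ₂ subset_union_right hψ₁ hψ₂ hz hmax
end
end

section
/- (Change of variable.) Let I, J ⊆ ℝ be open intervals, U ⊆ X open, and φ:I→J a C¹ diffeomorphism with φ' > 0. Let F=F(x,p,q) be continuous on U×ℝ×ℝ, even and convex in p. If u is a metric viscosity subsolution of F(x,|Du|,∂ₜu)=0 in I×U, then v(s,x) := u(φ⁻¹(s),x) is a metric viscosity subsolution of F(x,|Dv|, φ'(φ⁻¹(s))·∂ₛv)=0 in J×U. -/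
open Filter Metric Set Topology

noncomputable section

variable {X : Type*} [MetricSpace X]

/-- A function differentiable on an open set with continuous derivative is strictly
differentiable there. -/
lemma hasStrictDerivAt_of_continuousOn {φ φ' : ℝ → ℝ} {I : Set ℝ} (hI : IsOpen I)
    (hderiv : ∀ t ∈ I, HasDerivAt φ (φ' t) t) (hcont : ContinuousOn φ' I) {t : ℝ} (ht : t ∈ I) :
    HasStrictDerivAt φ (φ' t) t :=
  hasStrictDerivAt_of_hasDerivAt_of_continuousAt
    (Filter.eventually_of_mem (hI.mem_nhds ht) hderiv) (hcont.continuousAt (hI.mem_nhds ht))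

/-- Reparametrization of the time variable. -/
def timeChange {Y : Type*} (φ : ℝ → ℝ) (z : ℝ × Y) : ℝ × Y := (φ z.1, z.2)

lemma continuousOn_timeChange {φ : ℝ → ℝ} {I : Set ℝ} {U : Set X} (hφ : ContinuousOn φ I) :
    ContinuousOn (timeChange φ) (I ×ˢ U) :=
  (hφ.comp continuousOn_fst fun _ hz => hz.1).prodMk continuousOn_snd

lemma slopeT_comp_timeChange (φ : ℝ → ℝ) (ψ : ℝ × X → ℝ) :
    slopeT (ψ ∘ timeChange φ) = slopeT ψ ∘ timeChange φ := rfl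

lemma slopeDownT_comp_timeChange (φ : ℝ → ℝ) (ψ : ℝ × X → ℝ) :
    slopeDownT (ψ ∘ timeChange φ) = slopeDownT ψ ∘ timeChange φ := rfl

lemma map_timeChange_nhdsWithin {φ : ℝ → ℝ} {I J : Set ℝ} {U : Set X} (hI : IsOpen I)
    (hJ : IsOpen J) (hU : IsOpen U) (hmaps : MapsTo φ I J)
    (hmap : ∀ t ∈ I, map φ (𝓝 t) = 𝓝 (φ t)) {z : ℝ × X} (hz : z ∈ I ×ˢ U) :
    map (timeChange φ) (𝓝[I ×ˢ U] z) = 𝓝[J ×ˢ U] (timeChange φ z) := by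
  have hz' : timeChange φ z ∈ J ×ˢ U := ⟨hmaps hz.1, hz.2⟩
  rw [(hI.prod hU).nhdsWithin_eq hz, (hJ.prod hU).nhdsWithin_eq hz']
  obtain ⟨t, x⟩ := z
  change map (Prod.map φ id) (𝓝 (t, x)) = 𝓝 (φ t, x)
  rw [nhds_prod_eq, nhds_prod_eq, ← Filter.prod_map_map_eq', hmap t hz.1, map_id]

lemma uscEnv_timeChange {φ φinv : ℝ → ℝ} {I J : Set ℝ} {U : Set X} (hI : IsOpen I)
    (hJ : IsOpen J) (hU : IsOpen U) (hmaps : MapsTo φ I J)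
    (hmap : ∀ t ∈ I, map φ (𝓝 t) = 𝓝 (φ t)) (hinv : ∀ t ∈ I, φinv (φ t) = t)
    (u : ℝ × X → EReal) {z : ℝ × X} (hz : z ∈ I ×ˢ U) :
    uscEnv (J ×ˢ U) (fun w => u (φinv w.1, w.2)) (timeChange φ z) = uscEnv (I ×ˢ U) u z := by
  unfold uscEnv
  rw [← map_timeChange_nhdsWithin hI hJ hU hmaps hmap hz, ← limsup_comp]
  refine limsup_congr (Filter.eventually_of_mem self_mem_nhdsWithin fun w hw => ?_)
  simp [timeChange, hinv w.1 hw.1]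

lemma uscEnvR_timeChange {φ : ℝ → ℝ} {I J : Set ℝ} {U : Set X} (hI : IsOpen I)
    (hJ : IsOpen J) (hU : IsOpen U) (hmaps : MapsTo φ I J)
    (hmap : ∀ t ∈ I, map φ (𝓝 t) = 𝓝 (φ t)) (f : ℝ × X → ℝ) {z : ℝ × X} (hz : z ∈ I ×ˢ U) :
    uscEnvR (I ×ˢ U) (f ∘ timeChange φ) z = uscEnvR (J ×ˢ U) f (timeChange φ z) := by
  unfold uscEnvR
  rw [← map_timeChange_nhdsWithin hI hJ hU hmaps hmap hz, ← limsup_comp]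

lemma hasDerivAt_comp_timeChange {Y : Type*} {φ : ℝ → ℝ} {a : ℝ} {ψ : ℝ × Y → ℝ} {z : ℝ × Y}
    (hφ : HasDerivAt φ a z.1)
    (hψ : DifferentiableAt ℝ (fun s : ℝ => ψ (s, z.2)) (φ z.1)) :
    HasDerivAt (fun s : ℝ => (ψ ∘ timeChange φ) (s, z.2))
      (a * timeDeriv ψ (timeChange φ z)) z.1 := by
  rw [mul_comm]
  exact hψ.hasDerivAt.comp z.1 hφ

lemma IsCQ.comp_timeChange {φ φ' : ℝ → ℝ} {I J : Set ℝ} {U : Set X} (hmaps : MapsTo φ I J)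
    (hφ : ∀ t ∈ I, HasStrictDerivAt φ (φ' t) t) (hcont : ContinuousOn φ' I)
    {ψ : ℝ × X → ℝ} (hψ : IsCQ (J ×ˢ U) ψ) : IsCQ (I ×ˢ U) (ψ ∘ timeChange φ) := by
  have hmapsT : MapsTo (timeChange φ) (I ×ˢ U) (J ×ˢ U) := fun z hz => ⟨hmaps hz.1, hz.2⟩
  have hcT : ContinuousOn (timeChange φ) (I ×ˢ U) :=
    continuousOn_timeChange fun t ht => (hφ t ht).hasDerivAt.continuousAt.continuousWithinAt
  obtain ⟨hlip, hdiff, htd⟩ := hψ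
  refine ⟨fun z hz => ?_, fun z hz => ?_, ?_⟩
  · obtain ⟨K, t, ht, hK⟩ := hlip _ (hmapsT hz)
    obtain ⟨L, s, hs, hL⟩ := (hφ z.1 hz.1).hasStrictFDerivAt.exists_lipschitzOnWith
    have hs' : Prod.fst ⁻¹' s ∈ 𝓝[I ×ˢ U] z :=
      nhdsWithin_le_nhds (continuous_fst.continuousAt.preimage_mem_nhds hs)
    have ht' : timeChange φ ⁻¹' t ∈ 𝓝[I ×ˢ U] z :=
      (hcT z hz).tendsto_nhdsWithin hmapsT ht
    refine ⟨K * max (L * 1) 1, _, inter_mem hs' ht', hK.comp (t := t) ?_ fun w hw => hw.2⟩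
    have hfst : LipschitzOnWith (L * 1) (fun w : ℝ × X => φ w.1)
        (Prod.fst ⁻¹' s ∩ timeChange φ ⁻¹' t) :=
      hL.comp LipschitzWith.prod_fst.lipschitzOnWith fun w hw => hw.1
    exact hfst.prodMk LipschitzWith.prod_snd.lipschitzOnWith
  · exact (hasDerivAt_comp_timeChange (hφ z.1 hz.1).hasDerivAt
      (hdiff _ (hmapsT hz))).differentiableAt
  · refine ContinuousOn.congr (f := fun z => φ' z.1 * timeDeriv ψ (timeChange φ z)) ?_
      fun z hz => (hasDerivAt_comp_timeChange (hφ z.1 hz.1).hasDerivAt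
        (hdiff _ (hmapsT hz))).deriv
    exact (hcont.comp continuousOn_fst fun z hz => hz.1).mul (htd.comp hcT hmapsT)

lemma IsC1UnderQ.comp_timeChange {φ φ' : ℝ → ℝ} {I J : Set ℝ} {U : Set X}
    (hmaps : MapsTo φ I J) (hφ : ∀ t ∈ I, HasStrictDerivAt φ (φ' t) t)
    (hcont : ContinuousOn φ' I) {ψ : ℝ × X → ℝ} (hψ : IsC1UnderQ (J ×ˢ U) ψ) :
    IsC1UnderQ (I ×ˢ U) (ψ ∘ timeChange φ) := by
  have hmapsT : MapsTo (timeChange φ) (I ×ˢ U) (J ×ˢ U) := fun z hz => ⟨hmaps hz.1, hz.2⟩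
  have hcT : ContinuousOn (timeChange φ) (I ×ˢ U) :=
    continuousOn_timeChange fun t ht => (hφ t ht).hasDerivAt.continuousAt.continuousWithinAt
  refine ⟨hψ.1.comp_timeChange hmaps hφ hcont, ?_, ?_⟩
  · rw [slopeT_comp_timeChange, slopeDownT_comp_timeChange]
    exact fun w hw => hψ.2.1 (hmapsT hw)
  · rw [slopeT_comp_timeChange]
    exact hψ.2.2.comp hcT hmapsT

/-- change of variable in time. -/
theorem stmt4 [CompleteSpace X] (hgeo : IsGeodesicSpace X)
    (I J : Set ℝ) (hI : IsOpen I) (hIc : I.OrdConnected)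
    (hJ : IsOpen J) (hJc : J.OrdConnected)
    (U : Set X) (hU : IsOpen U)
    (φ φ' φinv : ℝ → ℝ)
    (hmaps : Set.MapsTo φ I J) (hinvmaps : Set.MapsTo φinv J I)
    (hderiv : ∀ t ∈ I, HasDerivAt φ (φ' t) t)
    (hderivcont : ContinuousOn φ' I)
    (hpos : ∀ t ∈ I, 0 < φ' t)
    (hinv₁ : ∀ t ∈ I, φinv (φ t) = t)
    (hinv₂ : ∀ s ∈ J, φ (φinv s) = s)
    (F : X → ℝ → ℝ → ℝ)
    (hFc : ContinuousOn (fun w : X × ℝ × ℝ => F w.1 w.2.1 w.2.2)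
      (U ×ˢ ((Set.univ : Set ℝ) ×ˢ (Set.univ : Set ℝ))))
    (hFe : ∀ x p q, F x (-p) q = F x p q)
    (hFconv : ∀ x q, ConvexOn ℝ Set.univ fun p => F x p q)
    (u : ℝ × X → EReal)
    (hu : IsSubsol (I ×ˢ U) (fun z p q => F z.2 p q) u) :
    IsSubsol (J ×ˢ U) (fun z p q => F z.2 p (φ' (φinv z.1) * q))
      (fun z => u (φinv z.1, z.2)) := by
  have hφ : ∀ t ∈ I, HasStrictDerivAt φ (φ' t) t := fun t ht =>
    hasStrictDerivAt_of_continuousOn hI hderiv hderivcont ht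
  have hmap : ∀ t ∈ I, map φ (𝓝 t) = 𝓝 (φ t) := fun t ht =>
    (hφ t ht).map_nhds_eq (hpos t ht).ne'
  have hmapsT : MapsTo (timeChange (Y := X) φ) (I ×ˢ U) (J ×ˢ U) :=
    fun z hz => ⟨hmaps hz.1, hz.2⟩
  intro ψ₁ ψ₂ hψ₁ hψ₂ z' hz'
  obtain ⟨z, hz, rfl⟩ : ∃ z ∈ I ×ˢ U, timeChange φ z = z' :=
    ⟨(φinv z'.1, z'.2), ⟨hinvmaps hz'.1, hz'.2⟩, Prod.ext (hinv₂ _ hz'.1) rfl⟩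
  rintro ⟨R, hR, heq, hle⟩
  have hcT : ContinuousOn (timeChange (Y := X) φ) (I ×ˢ U) :=
    continuousOn_timeChange fun t ht => (hderiv t ht).continuousAt.continuousWithinAt
  have henv : ∀ w ∈ I ×ˢ U, uscEnv (J ×ˢ U) (fun w => u (φinv w.1, w.2)) (timeChange φ w) =
      uscEnv (I ×ˢ U) u w := fun w hw => uscEnv_timeChange hI hJ hU hmaps hmap hinv₁ u hw
  have h₁ : IsC1UnderQ (I ×ˢ U) (ψ₁ ∘ timeChange φ) :=
    hψ₁.comp_timeChange hmaps hφ hderivcont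
  obtain ⟨r, hr, hball⟩ := Metric.continuousAt_iff.1
    (hcT.continuousAt ((hI.prod hU).mem_nhds hz)) R hR
  have key := hu _ _ h₁ (hψ₂.comp_timeChange hmaps hφ hderivcont) z hz
    ⟨r, hr, (henv z hz).symm.trans heq, fun w hw =>
      (henv w hw.2).symm.trans_le (hle _ ⟨hball hw.1, hmapsT hw.2⟩)⟩
  have htime : timeDeriv (fun w => (ψ₁ ∘ timeChange φ) w + (ψ₂ ∘ timeChange φ) w) z =
      φ' z.1 * timeDeriv (fun w => ψ₁ w + ψ₂ w) (timeChange φ z) :=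
    (hasDerivAt_comp_timeChange (ψ := fun w => ψ₁ w + ψ₂ w) (hderiv z.1 hz.1)
      ((hψ₁.1.2.1 _ hz').add (hψ₂.2.1 _ hz'))).deriv
  rw [htime, slopeT_comp_timeChange, slopeT_comp_timeChange,
    uscEnvR_timeChange hI hJ hU hmaps hmap (slopeT ψ₂) hz] at key
  have hinvz : φinv (timeChange φ z).1 = z.1 := hinv₁ z.1 hz.1
  have hsnd : (timeChange φ z).2 = z.2 := rfl
  simp only [Fr, hinvz, hsnd] at key ⊢
  exact key
end
end

section
/- (Strong solutions are viscosity subsolutions.) Let F=F(z,p,q) be continuous on Q×ℝ×ℝ, even and convex in p. Let ψ₁ ∈ C̄¹(Q) and ψ₂ ∈ 𝒞(Q), and suppose ψ = ψ₁+ψ₂ satisfies F_{|∇ψ₂|*(z)}(z, |∇ψ₁|(z), ∂ₜψ(z)) ≤ 0 for all z ∈ Q. Then ψ is a metric viscosity subsolution of F(z,|Du|,∂ₜu)=0 in Q. -/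
open Filter Metric Set Topology

noncomputable section

variable {X : Type*} [MetricSpace X]

/-- A function with a local Lipschitz-type bound at `x`: the difference quotients stay bounded. -/
def LipAt (v : X → ℝ) (x : X) : Prop :=
  ∃ K : ℝ, 0 ≤ K ∧ ∀ᶠ y in 𝓝 x, |v y - v x| ≤ K * dist y x

/-- Bounding a real `limsup` of a nonnegative function; the filter may be trivial. -/
lemma limsup_le_of_nonneg {α : Type*} {l : Filter α} {f : α → ℝ} {c : ℝ} (hf : ∀ y, 0 ≤ f y)
    (hc : 0 ≤ c) (h : ∀ᶠ y in l, f y ≤ c) : limsup f l ≤ c := by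
  rcases l.eq_or_neBot with rfl | hl
  · simpa [limsup_eq] using hc
  · exact limsup_le_of_le (isBoundedUnder_of ⟨0, hf⟩).isCoboundedUnder_le h

lemma mslope_le {v : X → ℝ} {x : X} {K : ℝ} (hK : 0 ≤ K)
    (h : ∀ᶠ y in 𝓝 x, |v y - v x| ≤ K * dist y x) : mslope v x ≤ K :=
  limsup_le_of_nonneg (fun _ => by positivity) hK <|
    (h.filter_mono nhdsWithin_le_nhds).mono fun _ hy => div_le_of_le_mul₀ dist_nonneg hK hy

lemma LipAt.isBoundedUnder {v : X → ℝ} {x : X} (h : LipAt v x) :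
    IsBoundedUnder (· ≤ ·) (𝓝[≠] x) fun y => |v y - v x| / dist y x := by
  obtain ⟨K, hK, h⟩ := h
  exact isBoundedUnder_of_eventually_le <|
    (h.filter_mono nhdsWithin_le_nhds).mono fun _ hy => div_le_of_le_mul₀ dist_nonneg hK hy

lemma LipAt.mslope_nonneg {v : X → ℝ} {x : X} (h : LipAt v x) : 0 ≤ mslope v x := by
  rcases (𝓝[≠] x).eq_or_neBot with hl | hl
  · simp [mslope, hl, limsup_eq]
  · exact le_limsup_of_frequently_le (Frequently.of_forall fun _ => by positivity)
      h.isBoundedUnder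

lemma LipAt.eventually_abs_sub_le {v : X → ℝ} {x : X} (h : LipAt v x) {ε : ℝ} (hε : 0 < ε) :
    ∀ᶠ y in 𝓝[≠] x, |v y - v x| ≤ (mslope v x + ε) * dist y x := by
  have := eventually_lt_of_limsup_lt (lt_add_of_pos_right (mslope v x) hε) h.isBoundedUnder
  filter_upwards [this, self_mem_nhdsWithin] with y hy hne
  exact ((div_lt_iff₀ (dist_pos.2 hne)).1 hy).le

/-- One-sided slopes are controlled by the local slopes of dominating increments. -/
lemma limsup_posPart_div_dist_le {f₁ f₂ f₃ : X → ℝ} {g : X → ℝ} {x : X} (h₁ : LipAt f₁ x)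
    (h₂ : LipAt f₂ x) (h₃ : LipAt f₃ x)
    (hg : ∀ᶠ y in 𝓝 x, g y ≤ |f₁ y - f₁ x| + |f₂ y - f₂ x| + |f₃ y - f₃ x|) :
    limsup (fun y => max (g y) 0 / dist y x) (𝓝[≠] x) ≤
      mslope f₁ x + mslope f₂ x + mslope f₃ x := by
  have n₁ := h₁.mslope_nonneg
  have n₂ := h₂.mslope_nonneg
  have n₃ := h₃.mslope_nonneg
  refine le_of_forall_pos_le_add fun ε hε => ?_
  have hε3 : 0 < ε / 3 := by positivity
  refine limsup_le_of_nonneg (fun _ => by positivity) (by positivity) ?_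
  filter_upwards [h₁.eventually_abs_sub_le hε3, h₂.eventually_abs_sub_le hε3,
    h₃.eventually_abs_sub_le hε3, hg.filter_mono nhdsWithin_le_nhds] with y e₁ e₂ e₃ e
  refine div_le_of_le_mul₀ dist_nonneg (by positivity) (max_le ?_ (by positivity))
  linarith

lemma LocLipOn.eventually_abs_sub_le {Q : Set (ℝ × X)} (hQ : IsOpen Q) {u : ℝ × X → ℝ}
    (hu : LocLipOn Q u) {z : ℝ × X} (hz : z ∈ Q) :
    ∃ K : ℝ, 0 ≤ K ∧ ∀ᶠ w in 𝓝 z, ∀ᶠ y in 𝓝 w.2, |u (w.1, y) - u (w.1, w.2)| ≤ K * dist y w.2 := by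
  obtain ⟨K, t, ht, hL⟩ := hu z hz
  rw [hQ.nhdsWithin_eq hz] at ht
  refine ⟨K, K.2, (eventually_eventually_nhds.2 ht).mono fun w hw => ?_⟩
  have hc : Tendsto (fun y => (w.1, y)) (𝓝 w.2) (𝓝 w) :=
    (Continuous.prodMk_right w.1).tendsto w.2
  filter_upwards [hc.eventually hw] with y hy
  simpa [Real.dist_eq, Prod.dist_eq] using hL.dist_le_mul _ hy _ (mem_of_mem_nhds hw)

lemma LocLipOn.lipAt {Q : Set (ℝ × X)} (hQ : IsOpen Q) {u : ℝ × X → ℝ} (hu : LocLipOn Q u)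
    {z : ℝ × X} (hz : z ∈ Q) : LipAt (fun y => u (z.1, y)) z.2 :=
  let ⟨K, hK, h⟩ := hu.eventually_abs_sub_le hQ hz
  ⟨K, hK, h.self_of_nhds⟩

lemma LocLipOn.continuousAt {Q : Set (ℝ × X)} (hQ : IsOpen Q) {u : ℝ × X → ℝ}
    (hu : LocLipOn Q u) {z : ℝ × X} (hz : z ∈ Q) : ContinuousAt u z := by
  obtain ⟨K, t, ht, hL⟩ := hu z hz
  rw [hQ.nhdsWithin_eq hz] at ht
  exact hL.continuousOn.continuousAt ht

lemma LocLipOn.slopeT_le_uscEnvR {Q : Set (ℝ × X)} (hQ : IsOpen Q) {u : ℝ × X → ℝ}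
    (hu : LocLipOn Q u) {z : ℝ × X} (hz : z ∈ Q) : slopeT u z ≤ uscEnvR Q (slopeT u) z := by
  obtain ⟨K, hK, h⟩ := hu.eventually_abs_sub_le hQ hz
  rw [uscEnvR, hQ.nhdsWithin_eq hz]
  refine le_limsup_of_frequently_le ?_ (isBoundedUnder_of_eventually_le (h.mono fun w hw =>
    mslope_le (v := fun y => u (w.1, y)) hK hw))
  exact fun hn => hn.self_of_nhds le_rfl

lemma uscEnv_coe_eq {α : Type*} [TopologicalSpace α] {s : Set α} {f : α → ℝ} {z : α}
    (hz : z ∈ s) (hf : ContinuousAt f z) : uscEnv s (fun w => (f w : EReal)) z = f z :=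
  haveI : (𝓝[s] z).NeBot := mem_closure_iff_nhdsWithin_neBot.1 (subset_closure hz)
  Tendsto.limsup_eq
    (((continuous_coe_real_ereal.tendsto _).comp hf.tendsto).mono_left nhdsWithin_le_nhds)

/-- If the intervals of radii `r` and `s` around `a` and `b` meet, an upper bound for `F_r` at `a`
is one for `F_{-s}` at `b`. -/
lemma Fr_neg_le_of_abs_sub_le {F : (ℝ × X) → ℝ → ℝ → ℝ} {z : ℝ × X} {a b r s q c : ℝ}
    (hF : Continuous fun p => F z p q) (hr : 0 ≤ r) (hs : 0 ≤ s) (hab : |a - b| ≤ r + s)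
    (h : Fr F r z a q ≤ c) : Fr F (-s) z b q ≤ c := by
  have hbdd : ∀ a r : ℝ, IsCompact ((fun p' => F z (a + r * p') q) '' Icc (-1 : ℝ) 1) :=
    fun a r => isCompact_Icc.image (hF.comp (by fun_prop))
  have hball : ∀ p, |p - a| ≤ r → F z p q ≤ c := by
    intro p hp
    obtain ⟨t, ht, rfl⟩ : ∃ t ∈ Icc (-1 : ℝ) 1, a + r * t = p := by
      rcases hr.eq_or_lt with rfl | hr
      · exact ⟨0, by simp, by have := abs_nonpos_iff.1 hp; linarith⟩
      · refine ⟨(p - a) / r, abs_le.1 ?_, by field_simp; ring⟩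
        rw [abs_div, abs_of_pos hr]
        exact div_le_one_of_le₀ hp hr.le
    rw [Fr, if_pos hr] at h
    exact (le_csSup (hbdd a r).bddAbove (mem_image_of_mem _ ht)).trans h
  rcases hs.eq_or_lt with rfl | hs
  · have hb : F z b q ≤ c := hball b (by rw [abs_sub_comm]; simpa using hab)
    simpa [Fr] using hb
  · obtain ⟨t, ht, hta⟩ : ∃ t ∈ Icc (-1 : ℝ) 1, |b + -s * t - a| ≤ r := by
      have hrs : 0 < r + s := by linarith
      refine ⟨(b - a) / (r + s), abs_le.1 ?_, ?_⟩
      · rw [abs_div, abs_of_pos hrs, abs_sub_comm]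
        exact div_le_one_of_le₀ hab hrs.le
      · have : b + -s * ((b - a) / (r + s)) - a = r * ((b - a) / (r + s)) := by
          field_simp; ring
        rw [this, abs_mul, abs_of_nonneg hr, abs_div, abs_of_pos hrs, abs_sub_comm]
        exact mul_le_of_le_one_right hr (div_le_one_of_le₀ hab hrs.le)
    rw [Fr, if_neg (by linarith)]
    exact (csInf_le (hbdd b (-s)).bddBelow (mem_image_of_mem _ ht)).trans (hball _ hta)

/-- strong solutions are viscosity subsolutions. -/
theorem stmt6 [CompleteSpace X] (hgeo : IsGeodesicSpace X)
    (Q : Set (ℝ × X)) (hQ : IsOpen Q)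
    (F : (ℝ × X) → ℝ → ℝ → ℝ)
    (hFc : ContinuousOn (fun w : (ℝ × X) × ℝ × ℝ => F w.1 w.2.1 w.2.2)
      (Q ×ˢ ((Set.univ : Set ℝ) ×ˢ (Set.univ : Set ℝ))))
    (hFe : ∀ z p q, F z (-p) q = F z p q)
    (hFconv : ∀ z q, ConvexOn ℝ Set.univ fun p => F z p q)
    (ψ₁ ψ₂ : ℝ × X → ℝ)
    (hψ₁ : IsC1UpperQ Q ψ₁) (hψ₂ : IsCQ Q ψ₂)
    (hineq : ∀ z ∈ Q,
      Fr F (uscEnvR Q (slopeT ψ₂) z) z (slopeT ψ₁ z)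
        (timeDeriv (fun w => ψ₁ w + ψ₂ w) z) ≤ 0) :
    IsSubsol Q F (fun z => ((ψ₁ z + ψ₂ z : ℝ) : EReal)) := by
  intro φ₁ φ₂ hφ₁ hφ₂ z hz
  rintro ⟨R, hR, hz0, hmax⟩
  have cψ : ∀ w ∈ Q, ContinuousAt (fun w => ψ₁ w + ψ₂ w) w := fun w hw =>
    (hψ₁.1.1.continuousAt hQ hw).add (hψ₂.1.continuousAt hQ hw)
  rw [uscEnv_coe_eq hz (cψ z hz), EReal.coe_eq_coe_iff] at hz0
  have hle : ∀ᶠ w in 𝓝 z, ψ₁ w + ψ₂ w ≤ φ₁ w + φ₂ w := by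
    filter_upwards [ball_mem_nhds z hR, hQ.mem_nhds hz] with w hw hwQ
    have := hmax w ⟨hw, hwQ⟩
    rwa [uscEnv_coe_eq hwQ (cψ w hwQ), EReal.coe_le_coe_iff] at this
  have htime : timeDeriv (fun w => ψ₁ w + ψ₂ w) z = timeDeriv (fun w => φ₁ w + φ₂ w) z := by
    have hdψ : DifferentiableAt ℝ (fun s => ψ₁ (s, z.2) + ψ₂ (s, z.2)) z.1 :=
      (hψ₁.1.2.1 z hz).add (hψ₂.2.1 z hz)
    have hdφ : DifferentiableAt ℝ (fun s => φ₁ (s, z.2) + φ₂ (s, z.2)) z.1 :=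
      (hφ₁.1.2.1 z hz).add (hφ₂.2.1 z hz)
    have hc : Tendsto (fun s : ℝ => (s, z.2)) (𝓝 z.1) (𝓝 z) :=
      (Continuous.prodMk_left z.2).tendsto z.1
    have hloc : IsLocalMax ((fun s => ψ₁ (s, z.2) + ψ₂ (s, z.2)) -
        fun s => φ₁ (s, z.2) + φ₂ (s, z.2)) z.1 := by
      filter_upwards [hc.eventually hle] with s hs
      simp only [Pi.sub_apply, Prod.mk.eta]
      linarith
    have h0 := hloc.deriv_eq_zero
    rw [deriv_sub hdψ hdφ] at h0
    exact sub_eq_zero.1 h0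
  have hc : Tendsto (fun y => (z.1, y)) (𝓝 z.2) (𝓝 z) :=
    (Continuous.prodMk_right z.1).tendsto z.2
  have lψ₁ := hψ₁.1.1.lipAt hQ hz
  have lψ₂ := hψ₂.1.lipAt hQ hz
  have lφ₁ := hφ₁.1.1.lipAt hQ hz
  have lφ₂ := hφ₂.1.lipAt hQ hz
  have hup : slopeT ψ₁ z ≤ slopeT φ₁ z + slopeT φ₂ z + slopeT ψ₂ z := by
    rw [← hψ₁.2.1 hz]
    refine limsup_posPart_div_dist_le lφ₁ lφ₂ lψ₂ ?_
    filter_upwards [hc.eventually hle] with y hy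
    have e₁ := le_abs_self (φ₁ (z.1, y) - φ₁ (z.1, z.2))
    have e₂ := le_abs_self (φ₂ (z.1, y) - φ₂ (z.1, z.2))
    have e₃ := neg_abs_le (ψ₂ (z.1, y) - ψ₂ (z.1, z.2))
    simp only [Prod.mk.eta] at *
    linarith
  have hdown : slopeT φ₁ z ≤ slopeT ψ₁ z + slopeT φ₂ z + slopeT ψ₂ z := by
    rw [← hφ₁.2.1 hz]
    refine limsup_posPart_div_dist_le lψ₁ lφ₂ lψ₂ ?_
    filter_upwards [hc.eventually hle] with y hy
    have e₁ := neg_abs_le (ψ₁ (z.1, y) - ψ₁ (z.1, z.2))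
    have e₂ := le_abs_self (φ₂ (z.1, y) - φ₂ (z.1, z.2))
    have e₃ := neg_abs_le (ψ₂ (z.1, y) - ψ₂ (z.1, z.2))
    simp only [Prod.mk.eta] at *
    linarith
  have hr := hψ₂.1.slopeT_le_uscEnvR hQ hz
  have hs := hφ₂.1.slopeT_le_uscEnvR hQ hz
  have hr0 : 0 ≤ uscEnvR Q (slopeT ψ₂) z := lψ₂.mslope_nonneg.trans hr
  have hs0 : 0 ≤ uscEnvR Q (slopeT φ₂) z := lφ₂.mslope_nonneg.trans hs
  have hF := hineq z hz
  rw [htime] at hF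
  have hcont : ∀ q, Continuous fun p => F z p q := fun q =>
    hFc.comp_continuous (f := fun p : ℝ => (z, p, q)) (by fun_prop) fun p => by simp [hz]
  exact Fr_neg_le_of_abs_sub_le (hcont _) hr0 hs0
    (abs_sub_le_iff.2 ⟨by linarith, by linarith⟩) hF
end
end

section
/- (Uniqueness of the critical value.) Let (X,d) be a compact geodesic metric space and let H:X×ℝ→ℝ satisfy H(x,p)=H(x,|p|), (A1) and (A2). If c ∈ ℝ is a constant such that the stationary equation H(x,|Dv|) = c admits a real-valued continuous metric viscosity solution on X, then c = max_{x∈X} H(x,0); in particular one has the two inequalities sup_{x∈X} inf_{p≥0} H(x,p) ≤ c ≤ sup_{x∈X} H(x,0). -/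
open Filter Metric Set Topology

noncomputable section

variable {X : Type*} [MetricSpace X]

theorem mslope_const (a : ℝ) (x : X) : mslope (fun _ : X => a) x = 0 := by
  rcases eq_or_neBot (𝓝[≠] x) with h | h
  · simp [mslope, h, limsup, limsSup]
  · simp [mslope]

theorem isCU_of_lipschitzWith {K : NNReal} {f : X → ℝ} (hf : LipschitzWith K f) :
    IsCU univ f :=
  fun _ _ => ⟨K, univ, univ_mem, hf.lipschitzOnWith⟩

theorem isC1UnderU_const (a : ℝ) : IsC1UnderU univ (fun _ : X => a) := by
  refine ⟨isCU_of_lipschitzWith (LipschitzWith.const a), fun x _ => ?_, ?_⟩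
  · simp [mslope, mslopeDown]
  · simpa only [funext (mslope_const a)] using continuousOn_const

theorem isC1UpperU_const (a : ℝ) : IsC1UpperU univ (fun _ : X => a) := by
  refine ⟨isCU_of_lipschitzWith (LipschitzWith.const a), fun x _ => ?_, ?_⟩
  · simp [mslope, mslopeUp]
  · simpa only [funext (mslope_const a)] using continuousOn_const

theorem uscEnv_univ_coe {v : X → ℝ} (hv : Continuous v) (x : X) :
    uscEnv univ (fun y => ((v y : ℝ) : EReal)) x = (v x : EReal) := by
  rw [uscEnv, nhdsWithin_univ]
  exact ((continuous_coe_real_ereal.comp hv).tendsto x).limsup_eq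

theorem lscEnv_univ_coe {v : X → ℝ} (hv : Continuous v) (x : X) :
    lscEnv univ (fun y => ((v y : ℝ) : EReal)) x = (v x : EReal) := by
  rw [lscEnv, nhdsWithin_univ]
  exact ((continuous_coe_real_ereal.comp hv).tendsto x).liminf_eq

/-- An even convex function on the line is minimal at the origin. -/
theorem ConvexOn.zero_le_of_even {f : ℝ → ℝ} (hf : ConvexOn ℝ univ f)
    (heven : ∀ p, f p = f |p|) (p : ℝ) : f 0 ≤ f p := by
  have hneg : f (-p) = f p := by rw [heven (-p), abs_neg, ← heven]
  have h := hf.2 (mem_univ p) (mem_univ (-p)) (by norm_num : (0 : ℝ) ≤ 1 / 2)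
    (by norm_num : (0 : ℝ) ≤ 1 / 2) (by norm_num)
  simp only [smul_eq_mul, hneg] at h
  rw [show (1 / 2 : ℝ) * p + 1 / 2 * -p = 0 by ring] at h
  linarith

theorem le_Hr {Y : Type*} {G : Y → ℝ → ℝ} {x : Y} (hcont : Continuous (G x)) {m : ℝ}
    (hm : ∀ p, m ≤ G x p) (r p : ℝ) : m ≤ Hr G r x p := by
  unfold Hr
  split_ifs
  · have hbdd : BddAbove ((fun p' => G x (p + r * p')) '' Icc (-1 : ℝ) 1) :=
      (isCompact_Icc.image (by fun_prop)).bddAbove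
    exact (hm _).trans (le_csSup hbdd ⟨0, by norm_num, rfl⟩)
  · refine le_csInf (Set.Nonempty.image _ ⟨0, by norm_num⟩) ?_
    rintro _ ⟨q, -, rfl⟩
    exact hm _

theorem Hr_zero {Y : Type*} (G : Y → ℝ → ℝ) (x : Y) (p : ℝ) : Hr G 0 x p = G x p := by
  have hne : (Icc (-1 : ℝ) 1).Nonempty := ⟨0, by norm_num⟩
  simp [Hr, hne.image_const]

/-- A continuous supersolution forces `G x 0 ≥ 0` at each of its minimum points. -/
theorem IsSupersolS.nonneg_of_isMin {G : X → ℝ → ℝ} {v : X → ℝ} (hv : Continuous v)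
    (hsol : IsSupersolS univ G (fun x => ((v x : ℝ) : EReal))) {x : X}
    (hx : ∀ y, v x ≤ v y) : 0 ≤ G x 0 := by
  have h := hsol (fun _ => v x) (fun _ => 0) (isC1UpperU_const _)
    (isCU_of_lipschitzWith (LipschitzWith.const 0)) x (mem_univ x)
    ⟨1, one_pos, by rw [lscEnv_univ_coe hv, add_zero], fun w _ => by
      rw [lscEnv_univ_coe hv, add_zero]
      exact EReal.coe_le_coe_iff.2 (hx w)⟩
  have hr : uscEnvR univ (mslope fun _ : X => (0 : ℝ)) x = 0 := by
    simp [uscEnvR, funext (mslope_const (X := X) 0)]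
  rwa [hr, mslope_const, Hr_zero] at h

/-- A continuous subsolution for a Hamiltonian minimal at `p = 0` forces `G x 0 ≤ 0`
at every point where `v` is touched from above by a Lipschitz function. -/
theorem IsSubsolS.nonpos_of_touch {G : X → ℝ → ℝ} {v : X → ℝ} (hv : Continuous v)
    (hsol : IsSubsolS univ G (fun x => ((v x : ℝ) : EReal))) {K : NNReal} {φ : X → ℝ}
    (hφ : LipschitzWith K φ) {y : X} (hy : ∀ w, v w - φ w ≤ v y - φ y)
    (hcont : Continuous (G y)) (hmin : ∀ p, G y 0 ≤ G y p) : G y 0 ≤ 0 := by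
  have h := hsol (fun _ => v y - φ y) φ (isC1UnderU_const _) (isCU_of_lipschitzWith hφ) y
    (mem_univ y)
    ⟨1, one_pos, by rw [uscEnv_univ_coe hv, sub_add_cancel], fun w _ => by
      rw [uscEnv_univ_coe hv]
      exact EReal.coe_le_coe_iff.2 (by linarith [hy w])⟩
  exact (le_Hr hcont hmin _ _).trans h

/-- On a compact space, a continuous subsolution for a Hamiltonian minimal at `p = 0` forces
`G x 0 ≤ 0` everywhere: points where `v` is touched from above by a cone are dense. -/
theorem IsSubsolS.nonpos [CompactSpace X] {G : X → ℝ → ℝ} {v : X → ℝ} (hv : Continuous v)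
    (hsol : IsSubsolS univ G (fun x => ((v x : ℝ) : EReal)))
    (hcont : Continuous fun w : X × ℝ => G w.1 w.2) (hmin : ∀ x p, G x 0 ≤ G x p) (x : X) :
    G x 0 ≤ 0 := by
  by_contra! hx
  have hG : Continuous fun y => G y 0 :=
    hcont.comp (Continuous.prodMk_left (0 : ℝ))
  obtain ⟨δ, hδ, hball⟩ := Metric.eventually_nhds_iff.1 ((hG.tendsto x).eventually_const_lt hx)
  obtain ⟨z, -, hz⟩ := isCompact_univ.exists_isMaxOn ⟨x, mem_univ x⟩ hv.continuousOn
  have hz : ∀ y, v y ≤ v z := fun y => hz (mem_univ y)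
  obtain ⟨k, hkδ⟩ : ∃ k : ℝ, k * δ = v z - v x + 1 := ⟨_, div_mul_cancel₀ _ hδ.ne'⟩
  have hk : 0 < k := pos_of_mul_pos_left (by linarith [hz x]) hδ.le
  have hlip : LipschitzWith ⟨k, hk.le⟩ fun y => k * dist y x :=
    lipschitzWith_iff_dist_le_mul.2 fun a b => by
      rw [Real.dist_eq, ← mul_sub, abs_mul, abs_of_pos hk]
      exact mul_le_mul_of_nonneg_left (abs_dist_sub_le a b x) hk.le
  obtain ⟨y, -, hy⟩ := isCompact_univ.exists_isMaxOn ⟨x, mem_univ x⟩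
    (hv.sub hlip.continuous).continuousOn
  have hy : ∀ w, v w - k * dist w x ≤ v y - k * dist y x := fun w => hy (mem_univ w)
  have hyx : dist y x < δ := by
    have hyx := hy x
    rw [dist_self, mul_zero, sub_zero] at hyx
    exact lt_of_mul_lt_mul_left (by linarith [hz y] : k * dist y x < k * δ) hk.le
  exact (hball hyx).not_ge (hsol.nonpos_of_touch hv hlip hy
    (hcont.comp (by fun_prop : Continuous fun p : ℝ => (y, p))) (hmin y))

/-- uniqueness of the critical value. -/
theorem stmt10 [CompactSpace X] [Nonempty X] (hgeo : IsGeodesicSpace X)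
    (H : X → ℝ → ℝ)
    (heven : ∀ x p, H x p = H x |p|)
    (hA1 : Continuous fun w : X × ℝ => H w.1 w.2)
    (hA2 : ∀ x, ConvexOn ℝ Set.univ (H x))
    (c : ℝ) (v : X → ℝ) (hv : Continuous v)
    (hsol : IsSolS (Set.univ : Set X) (fun x p => H x p - c) (fun x => ((v x : ℝ) : EReal))) :
    IsGreatest (Set.range fun x => H x 0) c ∧
    (⨆ x : X, ⨅ p : Set.Ici (0:ℝ), ((H x p : ℝ) : EReal)) ≤ (c : EReal) ∧
    (c : EReal) ≤ ⨆ x : X, ((H x 0 : ℝ) : EReal) := by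
  have hle : ∀ x, H x 0 ≤ c := fun x => by
    have h := hsol.1.nonpos hv (hA1.sub continuous_const)
      (fun x p => sub_le_sub_right ((hA2 x).zero_le_of_even (heven x) p) c) x
    linarith
  obtain ⟨x₀, -, hx₀⟩ := isCompact_univ.exists_isMinOn univ_nonempty hv.continuousOn
  have hge : c ≤ H x₀ 0 := sub_nonneg.1
    (hsol.2.nonneg_of_isMin hv fun y => hx₀ (mem_univ y))
  refine ⟨⟨⟨x₀, le_antisymm (hle x₀) hge⟩, ?_⟩, ?_, ?_⟩
  · rintro _ ⟨x, rfl⟩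
    exact hle x
  · refine iSup_le fun x => (iInf_le _ ⟨0, self_mem_Ici⟩).trans ?_
    exact EReal.coe_le_coe_iff.2 (hle x)
  · exact (EReal.coe_le_coe_iff.2 hge).trans (le_iSup (fun x => ((H x 0 : ℝ) : EReal)) x₀)
end
end
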